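/- arXiv:2501.16104 — 9 statements merged into one kernel-verified Lean document; each statement's English description precedes it below -/
import Mathlib

section
/- Let K be a field, V a vector space over K, and x ∈ V with x ≠ 0. For every element Φ of the degree-2 component ⋀²V of the exterior algebra of V, one has ι(x) ∧ Φ = 0 if and only if there exists y ∈ V such that Φ = ι(x) ∧ ι(y). -/
/-- Contracting a degree-2 element of the exterior algebra with a functional gives a vector. -/
theorem ExteriorAlgebra.contractLeft_mem_range_ι_of_mem_sq {R M : Type*} [CommRing R]
    [AddCommGroup M] [Module R M] (d : Module.Dual R M) {Φ : ExteriorAlgebra R M}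
    (hΦ : Φ ∈ (LinearMap.range (ExteriorAlgebra.ι R : M →ₗ[R] ExteriorAlgebra R M)) ^ 2) :
    CliffordAlgebra.contractLeft (Q := (0 : QuadraticForm R M)) d Φ ∈
      LinearMap.range (ExteriorAlgebra.ι R : M →ₗ[R] ExteriorAlgebra R M) := by
  rw [pow_two] at hΦ
  induction hΦ using Submodule.mul_induction_on' with
  | mem_mul_mem m hm n hn =>
    obtain ⟨a, rfl⟩ := hm
    obtain ⟨b, rfl⟩ := hn
    refine ⟨d a • b - d b • a, ?_⟩
    unfold ExteriorAlgebra.ι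
    rw [CliffordAlgebra.contractLeft_ι_mul, CliffordAlgebra.contractLeft_ι,
      ← Algebra.commutes, ← Algebra.smul_def, map_sub, map_smul, map_smul]
  | add m _ n _ hm hn =>
    rw [map_add]
    exact add_mem hm hn

/-- If `x ≠ 0` and `Φ` lies in the degree-2 component of the exterior algebra of `V`,
then `ι x * Φ = 0` iff `Φ = ι x * ι y` for some `y`. -/
theorem stmt_0 (K V : Type*) [Field K] [AddCommGroup V] [Module K V]
    (x : V) (hx : x ≠ 0) (Φ : ExteriorAlgebra K V)
    (hΦ : Φ ∈ (LinearMap.range (ExteriorAlgebra.ι K : V →ₗ[K] ExteriorAlgebra K V)) ^ 2) :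
    ExteriorAlgebra.ι K x * Φ = 0 ↔
      ∃ y : V, Φ = ExteriorAlgebra.ι K x * ExteriorAlgebra.ι K y := by
  constructor
  · intro h
    obtain ⟨d, hd⟩ := Module.Projective.exists_dual_eq_one K hx
    obtain ⟨y, hy⟩ := ExteriorAlgebra.contractLeft_mem_range_ι_of_mem_sq d hΦ
    refine ⟨y, ?_⟩
    have key := CliffordAlgebra.contractLeft_ι_mul (Q := (0 : QuadraticForm K V)) d x Φ
    change CliffordAlgebra.contractLeft d (ExteriorAlgebra.ι K x * Φ) =
      d x • Φ - ExteriorAlgebra.ι K x * _ at key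
    rw [h, map_zero, hd, one_smul, ← hy] at key
    exact sub_eq_zero.mp key.symm
  · rintro ⟨y, rfl⟩
    rw [← mul_assoc, ExteriorAlgebra.ι_sq_zero, zero_mul]
end

section
/- Let K be a field, V a vector space over K, and x₁, x₂, y₁, y₂ ∈ V with ι(x₁) ∧ ι(x₂) ≠ 0 in the exterior algebra of V. Then ι(x₁) ∧ ι(x₂) = ι(y₁) ∧ ι(y₂) if and only if there exist scalars α, β, γ, δ ∈ K with αδ − βγ = 1 such that y₁ = α·x₁ + β·x₂ and y₂ = γ·x₁ + δ·x₂ (i.e. the two pairs are 'specially related'). -/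
namespace ExteriorAlgebra

theorem ι_mul_ι_linear_combination {R M : Type*} [CommRing R] [AddCommGroup M] [Module R M]
    (x₁ x₂ : M) (α β γ δ : R) :
    ι R (α • x₁ + β • x₂) * ι R (γ • x₁ + δ • x₂) =
      (α * δ - β * γ) • (ι R x₁ * ι R x₂) := by
  have hswap : ι R x₂ * ι R x₁ = -(ι R x₁ * ι R x₂) :=
    eq_neg_of_add_eq_zero_left (ι_add_mul_swap x₂ x₁)
  simp only [map_add, map_smul, add_mul, mul_add, smul_mul_smul_comm, ι_sq_zero, hswap]
  module

/-- Contracting a product of two vectors with a linear form gives a vector. -/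
theorem contractLeft_ι_mul_ι {R M : Type*} [CommRing R] [AddCommGroup M] [Module R M]
    (d : Module.Dual R M) (a b : M) :
    CliffordAlgebra.contractLeft (Q := (0 : QuadraticForm R M)) d (ι R a * ι R b) =
      ι R (d a • b - d b • a) := by
  rw [ι, CliffordAlgebra.contractLeft_ι_mul, CliffordAlgebra.contractLeft_ι,
    ← Algebra.commutes, ← Algebra.smul_def, map_sub, map_smul, map_smul]

theorem smul_sub_smul_eq_of_ι_mul_ι_eq {R M : Type*} [CommRing R] [AddCommGroup M] [Module R M]
    {a b a' b' : M} (h : ι R a * ι R b = ι R a' * ι R b') (d : Module.Dual R M) :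
    d a • b - d b • a = d a' • b' - d b' • a' := by
  rw [← ι_inj R, ← contractLeft_ι_mul_ι, ← contractLeft_ι_mul_ι, h]

theorem exists_dual_eq_one_eq_zero_of_ι_mul_ι_ne_zero {K V : Type*} [Field K] [AddCommGroup V]
    [Module K V] {a b : V} (h : ι K a * ι K b ≠ 0) :
    ∃ d : Module.Dual K V, d a = 1 ∧ d b = 0 := by
  have ha : a ∉ Submodule.span K {b} := by
    rw [Submodule.mem_span_singleton]
    rintro ⟨c, rfl⟩
    simp at h
  obtain ⟨f, hfa, hf⟩ := Submodule.exists_le_ker_of_notMem ha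
  have hfb : f b = 0 := hf (Submodule.mem_span_singleton_self b)
  exact ⟨(f a)⁻¹ • f, by simp [hfa], by simp [hfb]⟩

end ExteriorAlgebra

/-- Two pairs of vectors have equal (nonzero) wedge products iff they are specially related. -/
theorem stmt_1 (K V : Type*) [Field K] [AddCommGroup V] [Module K V]
    (x₁ x₂ y₁ y₂ : V)
    (h : ExteriorAlgebra.ι K x₁ * ExteriorAlgebra.ι K x₂ ≠ 0) :
    ExteriorAlgebra.ι K x₁ * ExteriorAlgebra.ι K x₂ =
        ExteriorAlgebra.ι K y₁ * ExteriorAlgebra.ι K y₂ ↔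
      ∃ α β γ δ : K, α * δ - β * γ = 1 ∧
        y₁ = α • x₁ + β • x₂ ∧ y₂ = γ • x₁ + δ • x₂ := by
  constructor
  · intro hxy
    have hy : ExteriorAlgebra.ι K y₁ * ExteriorAlgebra.ι K y₂ ≠ 0 := hxy ▸ h
    have hy' : ExteriorAlgebra.ι K y₂ * ExteriorAlgebra.ι K y₁ ≠ 0 := fun h0 ↦
      hy (by simpa [h0] using ExteriorAlgebra.ι_add_mul_swap (R := K) y₁ y₂)
    obtain ⟨d, hd₁, hd₂⟩ := ExteriorAlgebra.exists_dual_eq_one_eq_zero_of_ι_mul_ι_ne_zero hy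
    obtain ⟨e, he₂, he₁⟩ := ExteriorAlgebra.exists_dual_eq_one_eq_zero_of_ι_mul_ι_ne_zero hy'
    have hd := ExteriorAlgebra.smul_sub_smul_eq_of_ι_mul_ι_eq hxy d
    have he := ExteriorAlgebra.smul_sub_smul_eq_of_ι_mul_ι_eq hxy e
    rw [hd₁, hd₂, one_smul, zero_smul, sub_zero] at hd
    rw [he₁, he₂, one_smul, zero_smul, zero_sub] at he
    have hy₁ : y₁ = e x₂ • x₁ + (-e x₁) • x₂ := by
      rw [← neg_neg y₁, ← he]
      module
    have hy₂ : y₂ = (-d x₂) • x₁ + d x₁ • x₂ := by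
      rw [← hd]
      module
    refine ⟨e x₂, -e x₁, -d x₂, d x₁, ?_, hy₁, hy₂⟩
    have hdet := ExteriorAlgebra.ι_mul_ι_linear_combination x₁ x₂ (e x₂) (-e x₁) (-d x₂) (d x₁)
    rw [← hy₁, ← hy₂, ← hxy] at hdet
    exact smul_left_injective K h (hdet.symm.trans (one_smul K _).symm)
  · rintro ⟨α, β, γ, δ, hdet, rfl, rfl⟩
    rw [ExteriorAlgebra.ι_mul_ι_linear_combination, hdet, one_smul]
end

section
/- Let E be a finite-dimensional real normed vector space and s ⊆ E an open set. Let V, Z : E → E be vector fields differentiable on s, and let λ, σ, ρ, κ, γ, δ : E → ℝ be functions differentiable on s with λ(p)·κ(p) − σ(p)·ρ(p) = 1 for all p ∈ s. Define the vector fields X = λ•V + σ•Z and Y = ρ•V + κ•Z (pointwise scalar multiplication and addition). If [V,Z](p) = γ(p)•V(p) + δ(p)•Z(p) for all p ∈ s, then there exist functions α, β : E → ℝ such that [X,Y](p) = α(p)•X(p) + β(p)•Y(p) for all p ∈ s. (Integrability of a simple bivector of vector fields is independent of the chosen representation.) -/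
open VectorField

/-- The Lie bracket of two combinations `a • V + b • W` and `c • V + d • W` of the vector
fields `V` and `W` with function coefficients. -/
theorem lieBracket_smul_add_smul {𝕜 E : Type*} [NontriviallyNormedField 𝕜]
    [NormedAddCommGroup E] [NormedSpace 𝕜 E] {V W X Y : E → E} {a b c d : E → 𝕜} {x : E}
    (hV : DifferentiableAt 𝕜 V x) (hW : DifferentiableAt 𝕜 W x)
    (ha : DifferentiableAt 𝕜 a x) (hb : DifferentiableAt 𝕜 b x)
    (hc : DifferentiableAt 𝕜 c x) (hd : DifferentiableAt 𝕜 d x)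
    (hX : X = fun y => a y • V y + b y • W y) (hY : Y = fun y => c y • V y + d y • W y) :
    lieBracket 𝕜 X Y x =
      (fderiv 𝕜 c x (X x) - fderiv 𝕜 a x (Y x)) • V x +
        (fderiv 𝕜 d x (X x) - fderiv 𝕜 b x (Y x)) • W x +
        (a x * d x - b x * c x) • lieBracket 𝕜 V W x := by
  have fderiv_comb {f g : E → 𝕜} (hf : DifferentiableAt 𝕜 f x) (hg : DifferentiableAt 𝕜 g x)
      (v : E) : fderiv 𝕜 (fun y => f y • V y + g y • W y) x v =
        f x • fderiv 𝕜 V x v + fderiv 𝕜 f x v • V x +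
          (g x • fderiv 𝕜 W x v + fderiv 𝕜 g x v • W x) := by
    rw [fderiv_fun_add (hf.fun_smul hV) (hg.fun_smul hW), fderiv_fun_smul hf hV,
      fderiv_fun_smul hg hW]
    simp
  have hDX := fderiv_comb ha hb (Y x)
  have hDY := fderiv_comb hc hd (X x)
  rw [← hX] at hDX
  rw [← hY] at hDY
  have hXx : X x = a x • V x + b x • W x := congrFun hX x
  have hYx : Y x = c x • V x + d x • W x := congrFun hY x
  have hVX : fderiv 𝕜 V x (X x) = a x • fderiv 𝕜 V x (V x) + b x • fderiv 𝕜 V x (W x) := by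
    simp [hXx]
  have hWX : fderiv 𝕜 W x (X x) = a x • fderiv 𝕜 W x (V x) + b x • fderiv 𝕜 W x (W x) := by
    simp [hXx]
  have hVY : fderiv 𝕜 V x (Y x) = c x • fderiv 𝕜 V x (V x) + d x • fderiv 𝕜 V x (W x) := by
    simp [hYx]
  have hWY : fderiv 𝕜 W x (Y x) = c x • fderiv 𝕜 W x (V x) + d x • fderiv 𝕜 W x (W x) := by
    simp [hYx]
  simp only [lieBracket, hDX, hDY, hVX, hWX, hVY, hWY]
  module

/-- Integrability of a simple bivector of vector fields is independent of the chosen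
representation: if `[V,Z]` is pointwise a combination of `V` and `Z` on an open set `s`,
and `X = l•V + σ•Z`, `Y = ρ•V + κ•Z` with `l·κ − σ·ρ = 1` on `s`, then `[X,Y]` is
pointwise a combination of `X` and `Y` on `s`. -/
theorem stmt_2 (E : Type*) [NormedAddCommGroup E] [NormedSpace ℝ E] [FiniteDimensional ℝ E]
    (s : Set E) (hs : IsOpen s)
    (V Z : E → E) (hV : DifferentiableOn ℝ V s) (hZ : DifferentiableOn ℝ Z s)
    (l σ ρ κ γ δ : E → ℝ)
    (hl : DifferentiableOn ℝ l s) (hσ : DifferentiableOn ℝ σ s)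
    (hρ : DifferentiableOn ℝ ρ s) (hκ : DifferentiableOn ℝ κ s)
    (hγ : DifferentiableOn ℝ γ s) (hδ : DifferentiableOn ℝ δ s)
    (hdet : ∀ p ∈ s, l p * κ p - σ p * ρ p = 1)
    (X Y : E → E)
    (hX : X = fun p => l p • V p + σ p • Z p)
    (hY : Y = fun p => ρ p • V p + κ p • Z p)
    (hVZ : ∀ p ∈ s, lieBracket ℝ V Z p = γ p • V p + δ p • Z p) :
    ∃ α β : E → ℝ, ∀ p ∈ s, lieBracket ℝ X Y p = α p • X p + β p • Y p := by
  let A p := fderiv ℝ ρ p (X p) - fderiv ℝ l p (Y p) + γ p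
  let B p := fderiv ℝ κ p (X p) - fderiv ℝ σ p (Y p) + δ p
  refine ⟨fun p => A p * κ p - B p * ρ p, fun p => B p * l p - A p * σ p, fun p hp => ?_⟩
  have hsp := hs.mem_nhds hp
  have hbracket : lieBracket ℝ X Y p = A p • V p + B p • Z p := by
    rw [lieBracket_smul_add_smul (hV.differentiableAt hsp) (hZ.differentiableAt hsp)
      (hl.differentiableAt hsp) (hσ.differentiableAt hsp) (hρ.differentiableAt hsp)
      (hκ.differentiableAt hsp) hX hY, hdet p hp, hVZ p hp]
    module
  have hXp : X p = l p • V p + σ p • Z p := congrFun hX p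
  have hYp : Y p = ρ p • V p + κ p • Z p := congrFun hY p
  have hVp : V p = κ p • X p - σ p • Y p := by
    calc V p = (l p * κ p - σ p * ρ p) • V p := by rw [hdet p hp, one_smul]
      _ = κ p • X p - σ p • Y p := by rw [hXp, hYp]; module
  have hZp : Z p = l p • Y p - ρ p • X p := by
    calc Z p = (l p * κ p - σ p * ρ p) • Z p := by rw [hdet p hp, one_smul]
      _ = l p • Y p - ρ p • X p := by rw [hXp, hYp]; module
  rw [hbracket, hVp, hZp]
  module
end

section
/- Fix n ≥ 1 and let P = ℝⁿ × ℝⁿ. Let U ⊆ P be an open set such that every (x,v) ∈ U has v ≠ 0 and satisfies (x, λv) ∈ U for all λ > 0. Let φ : P → ℝⁿ be differentiable on U, and define the horizontal vector field W(x,v) = (v, φ(x,v)) and the radial vector field R(x,v) = (0,v). Then the Lie bracket satisfies [R,W](p) = W(p) for every p ∈ U if and only if φ is radially quadratic on U, i.e. φ(x, λv) = λ²·φ(x,v) for all (x,v) ∈ U and all λ > 0. -/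
open VectorField

section Radial

variable {E F : Type*} [NormedAddCommGroup E] [NormedSpace ℝ E]
  [NormedAddCommGroup F] [NormedSpace ℝ F]

/-- The bracket of the radial field `(x, v) ↦ (0, v)` with a horizontal field. -/
lemma lieBracket_radial_horizontal {φ : E × E → E} {p : E × E} (hφ : DifferentiableAt ℝ φ p) :
    lieBracket ℝ (fun q : E × E => ((0 : E), q.2)) (fun q => (q.2, φ q)) p =
      (p.2, fderiv ℝ φ p (0, p.2) - φ p) := by
  have hW : HasFDerivAt (fun q : E × E => (q.2, φ q))
      ((ContinuousLinearMap.snd ℝ E E).prod (fderiv ℝ φ p)) p :=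
    hasFDerivAt_snd.prodMk hφ.hasFDerivAt
  have hR : HasFDerivAt (fun q : E × E => ((0 : E), q.2))
      ((0 : E × E →L[ℝ] E).prod (ContinuousLinearMap.snd ℝ E E)) p :=
    (hasFDerivAt_const (0 : E) p).prodMk hasFDerivAt_snd
  rw [lieBracket, hW.fderiv, hR.fderiv]
  simp

lemma hasDerivAt_comp_radial {φ : E × E → F} {x v : E} {l : ℝ}
    (hφ : DifferentiableAt ℝ φ (x, l • v)) :
    HasDerivAt (fun t : ℝ => φ (x, t • v)) (fderiv ℝ φ (x, l • v) (0, v)) l := by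
  have h : HasDerivAt (fun t : ℝ => (x, t • v)) ((0 : E), v) l := by
    simpa using (hasDerivAt_const l x).prodMk ((hasDerivAt_id l).smul_const v)
  exact hφ.hasFDerivAt.comp_hasDerivAt l h

/-- **Euler's theorem** for maps that are positively homogeneous of degree two in the
second variable. -/
lemma fderiv_radial_eq_two_smul_iff {U : Set (E × E)} (hU : IsOpen U)
    (hUcone : ∀ p ∈ U, ∀ l : ℝ, 0 < l → (p.1, l • p.2) ∈ U)
    {φ : E × E → F} (hφ : DifferentiableOn ℝ φ U) :
    (∀ p ∈ U, fderiv ℝ φ p (0, p.2) = (2 : ℝ) • φ p) ↔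
      ∀ p ∈ U, ∀ l : ℝ, 0 < l → φ (p.1, l • p.2) = l ^ 2 • φ p := by
  have hderiv : ∀ p ∈ U, ∀ l : ℝ, 0 < l → HasDerivAt (fun t : ℝ => φ (p.1, t • p.2))
      (fderiv ℝ φ (p.1, l • p.2) (0, p.2)) l := fun p hp l hl =>
    hasDerivAt_comp_radial (hφ.differentiableAt (hU.mem_nhds (hUcone p hp l hl)))
  constructor
  · intro h p hp l hl
    have hconst : ∀ t ∈ Set.Ioi (0 : ℝ),
        HasDerivAt (fun s : ℝ => (s ^ 2)⁻¹ • φ (p.1, s • p.2)) 0 t := by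
      intro t (ht : 0 < t)
      have hEuler : fderiv ℝ φ (p.1, t • p.2) (0, p.2) =
          (2 * t⁻¹) • φ (p.1, t • p.2) := by
        have hsmul : ((0 : E), t • p.2) = t • ((0 : E), p.2) := by simp
        have := h _ (hUcone p hp t ht)
        rw [hsmul, map_smul] at this
        rw [mul_comm, mul_smul, ← this, inv_smul_smul₀ ht.ne']
      convert ((hasDerivAt_pow 2 t).fun_inv (pow_ne_zero 2 ht.ne')).fun_smul
        (hderiv p hp t ht) using 1
      rw [hEuler, smul_smul, ← add_smul]
      symm
      convert zero_smul ℝ _ using 2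
      field_simp
      norm_num
      ring
    have heq := isOpen_Ioi.is_const_of_deriv_eq_zero isPreconnected_Ioi
      (fun t ht => (hconst t ht).differentiableAt.differentiableWithinAt)
      (fun t ht => (hconst t ht).deriv) (Set.mem_Ioi.2 hl) (Set.mem_Ioi.2 one_pos)
    rw [inv_smul_eq_iff₀ (pow_ne_zero 2 hl.ne')] at heq
    simpa using heq
  · intro h p hp
    have hquad : HasDerivAt (fun t : ℝ => t ^ 2 • φ p) ((2 : ℝ) • φ p) 1 := by
      simpa using (hasDerivAt_pow 2 (1 : ℝ)).smul_const (φ p)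
    have hray := (hderiv p hp 1 one_pos).congr_of_eventuallyEq
      (f₁ := fun t : ℝ => t ^ 2 • φ p)
      ((lt_mem_nhds one_pos).mono fun t ht => (h p hp t ht).symm)
    simpa using hray.unique hquad

end Radial

/-- A horizontal field `W(x,v) = (v, φ(x,v))` satisfies `[R,W] = W` on `U`
(with `R(x,v) = (0,v)` the radial field) iff `φ` is radially quadratic on `U`. -/
theorem stmt_3 (n : ℕ) (hn : 1 ≤ n)
    (U : Set ((Fin n → ℝ) × (Fin n → ℝ))) (hU : IsOpen U)
    (hU0 : ∀ p ∈ U, p.2 ≠ 0)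
    (hUcone : ∀ p ∈ U, ∀ l : ℝ, 0 < l → (p.1, l • p.2) ∈ U)
    (φ : (Fin n → ℝ) × (Fin n → ℝ) → (Fin n → ℝ))
    (hφ : DifferentiableOn ℝ φ U)
    (W R : (Fin n → ℝ) × (Fin n → ℝ) → (Fin n → ℝ) × (Fin n → ℝ))
    (hW : W = fun p => (p.2, φ p))
    (hR : R = fun p => (0, p.2)) :
    (∀ p ∈ U, lieBracket ℝ R W p = W p) ↔
      (∀ p ∈ U, ∀ l : ℝ, 0 < l → φ (p.1, l • p.2) = l ^ 2 • φ p) := by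
  subst hW hR
  simp_rw [← fderiv_radial_eq_two_smul_iff hU hUcone hφ]
  refine forall₂_congr fun p hp => ?_
  rw [lieBracket_radial_horizontal (hφ.differentiableAt (hU.mem_nhds hp)), Prod.mk.injEq,
    sub_eq_iff_eq_add, two_smul]
  simp
end

section
/- Fix n ≥ 1 and let P = ℝⁿ × ℝⁿ. Let U ⊆ P be an open set such that every (x,v) ∈ U has v ≠ 0 and satisfies (x, λv) ∈ U for all λ > 0. Let φ : P → ℝⁿ satisfy φ(x,λv) = λ²·φ(x,v) on U for λ > 0, let k be a nonzero integer, and let F̂ : P → ℝ be differentiable on U, nowhere zero on U, with F̂(x,λv) = λᵏ·F̂(x,v) for all (x,v) ∈ U and λ > 0. Define (WF̂)(x,v) = DF̂(x,v)[(v, φ(x,v))] and φ̂(x,v) = φ(x,v) − ((WF̂)(x,v)/(k·F̂(x,v)))·v. Then: (a) φ̂(x,λv) = λ²·φ̂(x,v) for all (x,v) ∈ U and λ > 0; and (b) DF̂(x,v)[(v, φ̂(x,v))] = 0 for all (x,v) ∈ U. (The transformed field Ŵ(x,v) = (v, φ̂(x,v)) is again a Vlasov field and is compatible with the kinematic indicator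 F̂; this is the transformation formula between kinematic domains.) -/
section FiberHomogeneous

variable {E V : Type*} [NormedAddCommGroup E] [NormedSpace ℝ E]
  [NormedAddCommGroup V] [NormedSpace ℝ V] {U : Set (E × V)} {F : E × V → ℝ} {k : ℤ}

/-- Euler's identity for functions homogeneous in the second variable. -/
theorem fderiv_vertical_of_homogeneous {p : E × V} (hF : DifferentiableAt ℝ F p)
    (hhom : ∀ l : ℝ, 0 < l → F (p.1, l • p.2) = l ^ k * F p) :
    fderiv ℝ F p (0, p.2) = k * F p := by
  have hcurve : HasDerivAt (fun t : ℝ => (p.1, t • p.2)) (0, p.2) 1 := by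
    simpa using (hasDerivAt_const (1 : ℝ) p.1).prodMk ((hasDerivAt_id (1 : ℝ)).smul_const p.2)
  have hcomp : HasDerivAt (fun t : ℝ => F (p.1, t • p.2)) (fderiv ℝ F p (0, p.2)) 1 :=
    hF.hasFDerivAt.comp_hasDerivAt_of_eq (1 : ℝ) hcurve (by simp)
  have hpow : HasDerivAt (fun t : ℝ => t ^ k * F p) (k * F p) 1 := by
    simpa using (hasDerivAt_zpow k (1 : ℝ) (Or.inl one_ne_zero)).mul_const (F p)
  refine hcomp.unique (hpow.congr_of_eventuallyEq ?_)
  filter_upwards [lt_mem_nhds (zero_lt_one' ℝ)] with t ht using hhom t ht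

/-- The derivative of a function homogeneous in the second variable is equivariant under the
scaling of that variable. -/
theorem fderiv_smul_snd_of_homogeneous (hU : IsOpen U)
    (hcone : ∀ p ∈ U, ∀ l : ℝ, 0 < l → (p.1, l • p.2) ∈ U) (hF : DifferentiableOn ℝ F U)
    (hhom : ∀ p ∈ U, ∀ l : ℝ, 0 < l → F (p.1, l • p.2) = l ^ k * F p)
    {p : E × V} (hp : p ∈ U) {l : ℝ} (hl : 0 < l) (a : E) (b : V) :
    fderiv ℝ F (p.1, l • p.2) (a, l • b) = l ^ k * fderiv ℝ F p (a, b) := by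
  have hscale : HasFDerivAt (fun q : E × V => (q.1, l • q.2))
      ((ContinuousLinearMap.fst ℝ E V).prod (l • ContinuousLinearMap.snd ℝ E V)) p :=
    hasFDerivAt_fst.prodMk (hasFDerivAt_snd.const_smul l)
  have hcomp := ((hF.differentiableAt
    (hU.mem_nhds (hcone p hp l hl))).hasFDerivAt).comp p hscale
  have hmul := (hF.differentiableAt (hU.mem_nhds hp)).hasFDerivAt.const_mul (l ^ k)
  have heq := hcomp.unique (hmul.congr_of_eventuallyEq (by
    filter_upwards [hU.mem_nhds hp] with q hq using hhom q hq l hl))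
  simpa using DFunLike.congr_fun heq (a, b)

end FiberHomogeneous

/-- The transformation formula between kinematic domains: the transformed vertical part
`φ̂ = φ − (WF̂/(k·F̂))·v` is again radially quadratic and the transformed field is
compatible with the kinematic indicator `F̂`. -/
theorem stmt_6 (n : ℕ) (hn : 1 ≤ n)
    (U : Set ((Fin n → ℝ) × (Fin n → ℝ))) (hU : IsOpen U)
    (hU0 : ∀ p ∈ U, p.2 ≠ 0)
    (hUcone : ∀ p ∈ U, ∀ l : ℝ, 0 < l → (p.1, l • p.2) ∈ U)
    (φ : (Fin n → ℝ) × (Fin n → ℝ) → (Fin n → ℝ))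
    (hφ : ∀ p ∈ U, ∀ l : ℝ, 0 < l → φ (p.1, l • p.2) = l ^ 2 • φ p)
    (k : ℤ) (hk : k ≠ 0)
    (Fh : (Fin n → ℝ) × (Fin n → ℝ) → ℝ)
    (hFh : DifferentiableOn ℝ Fh U)
    (hFh0 : ∀ p ∈ U, Fh p ≠ 0)
    (hFhom : ∀ p ∈ U, ∀ l : ℝ, 0 < l → Fh (p.1, l • p.2) = l ^ k * Fh p)
    (WFh : (Fin n → ℝ) × (Fin n → ℝ) → ℝ)
    (hWFh : WFh = fun p => fderiv ℝ Fh p (p.2, φ p))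
    (φhat : (Fin n → ℝ) × (Fin n → ℝ) → (Fin n → ℝ))
    (hφhat : φhat = fun p => φ p - (WFh p / ((k : ℝ) * Fh p)) • p.2) :
    (∀ p ∈ U, ∀ l : ℝ, 0 < l → φhat (p.1, l • p.2) = l ^ 2 • φhat p) ∧
      (∀ p ∈ U, fderiv ℝ Fh p (p.2, φhat p) = 0) := by
  subst hWFh hφhat
  have hkR : (k : ℝ) ≠ 0 := Int.cast_ne_zero.mpr hk
  refine ⟨fun p hp l hl => ?_, fun p hp => ?_⟩
  · have hW : fderiv ℝ Fh (p.1, l • p.2) (l • p.2, l ^ 2 • φ p)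
        = l * (l ^ k * fderiv ℝ Fh p (p.2, φ p)) := by
      rw [← fderiv_smul_snd_of_homogeneous hU hUcone hFh hFhom hp hl, ← smul_eq_mul,
        ← map_smul, Prod.smul_mk, smul_smul, sq]
    have hlk : l ^ k ≠ 0 := zpow_ne_zero k hl.ne'
    have hF := hFh0 p hp
    simp only [hφ p hp l hl, hFhom p hp l hl, hW, smul_sub, smul_smul]
    congr 2
    field_simp
  · have hsplit (c : ℝ) : (p.2, φ p - c • p.2) = (p.2, φ p) - c • ((0, p.2) : _ × _) := by
      simp
    have hF := hFh0 p hp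
    simp only [hsplit, map_sub, map_smul, smul_eq_mul, fderiv_vertical_of_homogeneous
      (hFh.differentiableAt (hU.mem_nhds hp)) (hFhom p hp)]
    field_simp
    ring
end

section
/- Fix n ≥ 1 and let U ⊆ ℝⁿ × (ℝⁿ∖{0}) satisfy (x, λv) ∈ U for all (x,v) ∈ U and λ ≠ 0. Let ψ : U → ℝⁿ and suppose the associated horizontal bivector is radially cubic: for all (x,v) ∈ U, all λ ≠ 0, and all indices i, j, one has (λvᵢ)·ψⱼ(x,λv) − (λvⱼ)·ψᵢ(x,λv) = λ³·(vᵢ·ψⱼ(x,v) − vⱼ·ψᵢ(x,v)). Define w(x,v) = ψ(x,v) − (⟨v, ψ(x,v)⟩/⟨v,v⟩)·v, where ⟨·,·⟩ is the Euclidean inner product. Then for all (x,v) ∈ U: (a) w(x,λv) = λ²·w(x,v) for all λ ≠ 0; (b) vᵢ·wⱼ(x,v) − vⱼ·wᵢ(x,v) = vᵢ·ψⱼ(x,v) − vⱼ·ψᵢ(x,v) for all i, j; and (c) ⟨v, w(x,v)⟩ = 0. (Construction of the coordinate-based Vlasov field W_crd from a radially cubic horizontal bivector: w is radially quadratic, represents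 the same bivector R∧X, and is compatible with the coordinate kinematic indicator F_crd = ⟨v,v⟩.) -/
open scoped BigOperators

/-- Multiplied by `⟨v,v⟩`, the part of `a` orthogonal to `v` is the contraction of `v ∧ a`
with `v`. -/
theorem sum_mul_self_mul_sub_proj {ι : Type*} [Fintype ι] (v a : ι → ℝ)
    (hv : ∑ i, v i * v i ≠ 0) (j : ι) :
    (∑ i, v i * v i) * (a j - (∑ i, v i * a i) / (∑ i, v i * v i) * v j) =
      ∑ i, v i * (v i * a j - v j * a i) := by
  have h : ∑ i, v i * (v i * a j - v j * a i) =
      (∑ i, v i * v i) * a j - (∑ i, v i * a i) * v j := by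
    rw [Finset.sum_mul, Finset.sum_mul, ← Finset.sum_sub_distrib]
    exact Finset.sum_congr rfl fun i _ => by ring
  rw [h, mul_sub, ← mul_assoc, mul_div_cancel₀ _ hv]

/-- Construction of the coordinate-based Vlasov field `W_crd` from a radially cubic
horizontal bivector: `w = ψ − (⟨v,ψ⟩/⟨v,v⟩)·v` is radially quadratic, represents the same
bivector `R∧X`, and is compatible with the coordinate kinematic indicator `⟨v,v⟩`. -/
theorem stmt_11 (n : ℕ) (hn : 1 ≤ n)
    (U : Set ((Fin n → ℝ) × (Fin n → ℝ)))
    (hU0 : ∀ p ∈ U, p.2 ≠ 0)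
    (hUcone : ∀ p ∈ U, ∀ l : ℝ, l ≠ 0 → (p.1, l • p.2) ∈ U)
    (ψ : (Fin n → ℝ) × (Fin n → ℝ) → (Fin n → ℝ))
    (hcubic : ∀ p ∈ U, ∀ l : ℝ, l ≠ 0 → ∀ i j : Fin n,
      (l * p.2 i) * ψ (p.1, l • p.2) j - (l * p.2 j) * ψ (p.1, l • p.2) i =
        l ^ 3 * (p.2 i * ψ p j - p.2 j * ψ p i))
    (w : (Fin n → ℝ) × (Fin n → ℝ) → (Fin n → ℝ))
    (hw : w = fun p => ψ p - ((∑ i, p.2 i * ψ p i) / (∑ i, p.2 i * p.2 i)) • p.2) :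
    ∀ p ∈ U,
      (∀ l : ℝ, l ≠ 0 → w (p.1, l • p.2) = l ^ 2 • w p) ∧
      (∀ i j : Fin n, p.2 i * w p j - p.2 j * w p i = p.2 i * ψ p j - p.2 j * ψ p i) ∧
      (∑ i, p.2 i * w p i) = 0 := by
  subst hw
  intro p hp
  have hS : ∑ i, p.2 i * p.2 i ≠ 0 := fun h => hU0 p hp <| funext fun i =>
    mul_self_eq_zero.mp
      ((Finset.sum_eq_zero_iff_of_nonneg fun i _ => mul_self_nonneg (p.2 i)).mp h i
        (Finset.mem_univ i))
  refine ⟨fun l hl => funext fun j => mul_left_cancel₀ hS ?_, fun i j => ?_, ?_⟩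
  · have hproj : (∑ i, l * p.2 i * ψ (p.1, l • p.2) i) / (∑ i, l * p.2 i * (l * p.2 i)) *
        (l * p.2 j) =
        (∑ i, p.2 i * ψ (p.1, l • p.2) i) / (∑ i, p.2 i * p.2 i) * p.2 j := by
      simp only [mul_mul_mul_comm l _ l, mul_assoc l, ← Finset.mul_sum]
      field_simp
    simp only [Pi.sub_apply, Pi.smul_apply, smul_eq_mul]
    rw [hproj, sum_mul_self_mul_sub_proj _ _ hS, mul_left_comm,
      sum_mul_self_mul_sub_proj _ _ hS, Finset.mul_sum]
    refine Finset.sum_congr rfl fun i _ => mul_left_cancel₀ hl ?_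
    linear_combination p.2 i * hcubic p hp l hl i j
  · simp only [Pi.sub_apply, Pi.smul_apply, smul_eq_mul]
    ring
  · simp only [Pi.sub_apply, Pi.smul_apply, smul_eq_mul, mul_sub, Finset.sum_sub_distrib,
      mul_left_comm (p.2 _), ← Finset.mul_sum]
    rw [div_mul_cancel₀ _ hS, sub_self]
end

section
/- Fix n ≥ 1 and let U ⊆ ℝⁿ × (ℝⁿ∖{0}) satisfy (x, λv) ∈ U for all (x,v) ∈ U and λ ≠ 0, and let ψ : U → ℝⁿ. The following are equivalent: (i) there exists φ : U → ℝⁿ with φ(x,λv) = λ²·φ(x,v) for all (x,v) ∈ U and λ ≠ 0, such that vᵢ·φⱼ(x,v) − vⱼ·φᵢ(x,v) = vᵢ·ψⱼ(x,v) − vⱼ·ψᵢ(x,v) for all (x,v) ∈ U and all indices i, j; (ii) for all (x,v) ∈ U, all λ ≠ 0, and all indices i, j, (λvᵢ)·ψⱼ(x,λv) − (λvⱼ)·ψᵢ(x,λv) = λ³·(vᵢ·ψⱼ(x,v) − vⱼ·ψᵢ(x,v)). (Equivalence (i) ⟺ (iii) of the Vlasov Bivector Theorem, in coordinates: a horizontal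 bivector Ψ = R∧X admits a representation Ψ = R∧W with W a Vlasov field if and only if Ψ is radially cubic.) -/
/-- The component of `w` orthogonal to `v`, as the contraction of the bivector `v ∧ w` with `v`,
divided by the squared Euclidean length of `v`. -/
noncomputable def orthogonalPart {n : ℕ} (v w : Fin n → ℝ) : Fin n → ℝ := fun j =>
  (∑ k, v k * (v k * w j - v j * w k)) / ∑ k, v k ^ 2

theorem sum_sq_ne_zero_of_ne_zero {n : ℕ} {v : Fin n → ℝ} (hv : v ≠ 0) :
    ∑ k, v k ^ 2 ≠ 0 := by
  intro h
  rw [Finset.sum_eq_zero_iff_of_nonneg fun k _ => sq_nonneg (v k)] at h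
  exact hv (funext fun k => pow_eq_zero_iff two_ne_zero |>.mp (h k (Finset.mem_univ k)))

theorem wedge_orthogonalPart {n : ℕ} {v : Fin n → ℝ} (hv : v ≠ 0) (w : Fin n → ℝ)
    (i j : Fin n) :
    v i * orthogonalPart v w j - v j * orthogonalPart v w i = v i * w j - v j * w i := by
  have hs := sum_sq_ne_zero_of_ne_zero hv
  unfold orthogonalPart
  rw [← mul_div_assoc, ← mul_div_assoc, ← sub_div, div_eq_iff hs, Finset.mul_sum,
    Finset.mul_sum, Finset.mul_sum, ← Finset.sum_sub_distrib]
  exact Finset.sum_congr rfl fun k _ => by ring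

theorem orthogonalPart_smul {n : ℕ} {v w w' : Fin n → ℝ} {l : ℝ} (hv : v ≠ 0) (hl : l ≠ 0)
    (h : ∀ i j, (l * v i) * w' j - (l * v j) * w' i = l ^ 3 * (v i * w j - v j * w i)) :
    orthogonalPart (l • v) w' = l ^ 2 • orthogonalPart v w := by
  have hs := sum_sq_ne_zero_of_ne_zero hv
  funext j
  simp only [orthogonalPart, Pi.smul_apply, smul_eq_mul, h, mul_pow, ← Finset.mul_sum]
  have hnum : ∑ k, l * v k * (l ^ 3 * (v k * w j - v j * w k)) =
      l ^ 4 * ∑ k, v k * (v k * w j - v j * w k) := by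
    rw [Finset.mul_sum]
    exact Finset.sum_congr rfl fun k _ => by ring
  rw [hnum, ← mul_div_assoc, div_eq_div_iff (mul_ne_zero (pow_ne_zero 2 hl) hs) hs]
  ring

/-- Vlasov Bivector Theorem, (i) ⟺ (iii) in coordinates: a horizontal bivector `R∧X`
(with vertical part `ψ`) admits a representation `R∧W` with `W` a Vlasov field (radially
quadratic vertical part `φ`) iff it is radially cubic. -/
theorem stmt_12 (n : ℕ) (hn : 1 ≤ n)
    (U : Set ((Fin n → ℝ) × (Fin n → ℝ)))
    (hU0 : ∀ p ∈ U, p.2 ≠ 0)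
    (hUcone : ∀ p ∈ U, ∀ l : ℝ, l ≠ 0 → (p.1, l • p.2) ∈ U)
    (ψ : (Fin n → ℝ) × (Fin n → ℝ) → (Fin n → ℝ)) :
    (∃ φ : (Fin n → ℝ) × (Fin n → ℝ) → (Fin n → ℝ),
        (∀ p ∈ U, ∀ l : ℝ, l ≠ 0 → φ (p.1, l • p.2) = l ^ 2 • φ p) ∧
        (∀ p ∈ U, ∀ i j : Fin n,
          p.2 i * φ p j - p.2 j * φ p i = p.2 i * ψ p j - p.2 j * ψ p i)) ↔
    (∀ p ∈ U, ∀ l : ℝ, l ≠ 0 → ∀ i j : Fin n,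
        (l * p.2 i) * ψ (p.1, l • p.2) j - (l * p.2 j) * ψ (p.1, l • p.2) i =
          l ^ 3 * (p.2 i * ψ p j - p.2 j * ψ p i)) := by
  constructor
  · rintro ⟨φ, hφ, h⟩ p hp l hl i j
    have hscaled := h _ (hUcone p hp l hl) i j
    simp only [hφ p hp l hl, Pi.smul_apply, smul_eq_mul] at hscaled
    rw [← hscaled, ← h p hp i j]
    ring
  · intro h
    exact ⟨fun p => orthogonalPart p.2 (ψ p),
      fun p hp l hl => orthogonalPart_smul (hU0 p hp) hl (h p hp l hl),
      fun p hp i j => wedge_orthogonalPart (hU0 p hp) (ψ p) i j⟩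
end

section
/- Fix n ≥ 1 and let U ⊆ ℝⁿ × (ℝⁿ∖{0}) be any set. Let φ, φ̂ : U → ℝⁿ satisfy vᵢ·φⱼ(x,v) − vⱼ·φᵢ(x,v) = vᵢ·φ̂ⱼ(x,v) − vⱼ·φ̂ᵢ(x,v) for all (x,v) ∈ U and all indices i, j (i.e. the bivectors R∧W and R∧Ŵ coincide, where W(x,v) = (v,φ(x,v)) and Ŵ(x,v) = (v,φ̂(x,v))). Let F̂ : ℝⁿ × ℝⁿ → ℝ be differentiable at each point of U with DF̂(x,v)[(v, φ̂(x,v))] = 0 (Ŵ is compatible with F̂) and DF̂(x,v)[(0,v)] ≠ 0 for all (x,v) ∈ U. Then φ̂(x,v) = φ(x,v) − (DF̂(x,v)[(v, φ(x,v))] / DF̂(x,v)[(0,v)])·v for all (x,v) ∈ U. (The transformation formula between kinematic domains is recovered from the Vlasov bivector.) -/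
/-- If the bivectors `v ∧ a` and `v ∧ b` coincide and `v ≠ 0`, then `a - b` is a multiple
of `v`. -/
theorem exists_eq_add_smul_of_wedge_eq {ι K : Type*} [Field K] {v a b : ι → K} (hv : v ≠ 0)
    (h : ∀ i j, v i * a j - v j * a i = v i * b j - v j * b i) :
    ∃ c : K, a = b + c • v := by
  obtain ⟨i, hi⟩ := Function.ne_iff.mp hv
  rw [Pi.zero_apply] at hi
  refine ⟨(a i - b i) / v i, funext fun j => ?_⟩
  simp only [Pi.add_apply, Pi.smul_apply, smul_eq_mul]
  field_simp
  linear_combination h i j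

/-- The transformation formula between kinematic domains is recovered from the Vlasov
bivector: if `R∧W = R∧Ŵ` on `U` and `Ŵ` is compatible with `F̂` (with `R⟨F̂⟩ ≠ 0`), then
`φ̂ = φ − (W⟨F̂⟩/R⟨F̂⟩)·v` on `U`. -/
theorem stmt_14 (n : ℕ) (hn : 1 ≤ n)
    (U : Set ((Fin n → ℝ) × (Fin n → ℝ)))
    (hU0 : ∀ p ∈ U, p.2 ≠ 0)
    (φ φhat : (Fin n → ℝ) × (Fin n → ℝ) → (Fin n → ℝ))
    (hbiv : ∀ p ∈ U, ∀ i j : Fin n,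
      p.2 i * φ p j - p.2 j * φ p i = p.2 i * φhat p j - p.2 j * φhat p i)
    (Fh : (Fin n → ℝ) × (Fin n → ℝ) → ℝ)
    (hFh : ∀ p ∈ U, DifferentiableAt ℝ Fh p)
    (hcompat : ∀ p ∈ U, fderiv ℝ Fh p (p.2, φhat p) = 0)
    (hrad : ∀ p ∈ U, fderiv ℝ Fh p (0, p.2) ≠ 0) :
    ∀ p ∈ U, φhat p =
      φ p - (fderiv ℝ Fh p (p.2, φ p) / fderiv ℝ Fh p (0, p.2)) • p.2 := by
  intro p hp
  obtain ⟨c, hc⟩ := exists_eq_add_smul_of_wedge_eq (hU0 p hp) (hbiv p hp)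
  have hsplit : (p.2, φ p) = (p.2, φhat p) + c • ((0 : Fin n → ℝ), p.2) := by
    simp [hc]
  have hW : fderiv ℝ Fh p (p.2, φ p) = c * fderiv ℝ Fh p (0, p.2) := by
    rw [hsplit, map_add, map_smul, hcompat p hp, zero_add, smul_eq_mul]
  rw [hW, mul_div_cancel_right₀ _ (hrad p hp), hc, add_sub_cancel_right]
end

section
/- Let V be a real vector space of finite dimension m with m ≥ 2, let Ω be a nonzero alternating m-linear form on V, let w ∈ V be nonzero, and let θ be an alternating (m−1)-linear form on V such that the interior product i_wθ (the (m−2)-form obtained by inserting w into the first argument of θ) is zero. Then there exists a unique scalar c ∈ ℝ such that θ = c · (i_wΩ), where i_wΩ is the (m−1)-form obtained by inserting w into the first argument of Ω. (Pointwise form of the lemma: a particle density form annihilated by the Vlasov field is a unique scalar multiple of the contraction of the volume form by the Vlasov field.) -/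
open Module

/-- An alternating form annihilated by `i_w` vanishes on every family containing `w`. -/
theorem AlternatingMap.map_eq_zero_of_curryLeft_eq_zero {R M N : Type*} [CommRing R]
    [AddCommGroup M] [Module R M] [AddCommGroup N] [Module R N] {n : ℕ}
    (f : M [⋀^Fin (n + 1)]→ₗ[R] N) {w : M} (hf : f.curryLeft w = 0)
    (u : Fin (n + 1) → M) {i : Fin (n + 1)} (hi : u i = w) : f u = 0 := by
  have hswap := f.map_perm u (Equiv.swap 0 i)
  have hcons : u ∘ Equiv.swap 0 i = Matrix.vecCons w (Fin.tail (u ∘ Equiv.swap 0 i)) := by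
    conv_lhs => rw [← Fin.cons_self_tail (u ∘ Equiv.swap 0 i)]
    simp [Matrix.vecCons, hi]
  rw [hcons, ← AlternatingMap.curryLeft_apply_apply, hf, AlternatingMap.zero_apply] at hswap
  exact (smul_eq_zero_iff_eq _).mp hswap.symm

/-- A nonzero vector is the first member of some basis. -/
theorem Module.Basis.exists_apply_zero_eq {K V : Type*} [Field K] [AddCommGroup V] [Module K V]
    [FiniteDimensional K V] {n : ℕ} (hdim : finrank K V = n + 1) {w : V} (hw : w ≠ 0) :
    ∃ b : Basis (Fin (n + 1)) K V, b 0 = w := by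
  have hli : LinearIndepOn K id ({w} : Set V) := LinearIndepOn.singleton hw
  let B := Basis.extend hli
  have hmem : w ∈ hli.extend (Set.subset_univ _) := hli.subset_extend _ rfl
  let e := B.indexEquiv (finBasisOfFinrankEq K V hdim)
  refine ⟨B.reindex (e.trans (Equiv.swap (e ⟨w, hmem⟩) 0)), ?_⟩
  simp [B]

/-- If the first basis vector annihilates an alternating form of degree one less than the
dimension, the form is determined by its value on the remaining basis vectors. -/
theorem Module.Basis.ext_alternating_of_curryLeft_eq_zero {R M N : Type*} [CommRing R]
    [AddCommGroup M] [Module R M] [AddCommGroup N] [Module R N] {n : ℕ}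
    (b : Basis (Fin (n + 2)) R M) {f g : M [⋀^Fin (n + 1)]→ₗ[R] N}
    (hf : f.curryLeft (b 0) = 0) (hg : g.curryLeft (b 0) = 0)
    (h : f (Fin.tail b) = g (Fin.tail b)) : f = g := by
  refine b.ext_alternating fun v hv => ?_
  by_cases h0 : ∃ i, v i = 0
  · obtain ⟨i, hi⟩ := h0
    rw [f.map_eq_zero_of_curryLeft_eq_zero hf _ (i := i) (by rw [hi]),
      g.map_eq_zero_of_curryLeft_eq_zero hg _ (i := i) (by rw [hi])]
  · push Not at h0
    choose σ hσ using fun i => Fin.exists_succ_eq.mpr (h0 i)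
    have hinj : Function.Injective σ := fun i j hij => hv (by rw [← hσ i, ← hσ j, hij])
    let τ : Equiv.Perm (Fin (n + 1)) := Equiv.ofBijective σ (Finite.injective_iff_bijective.mp hinj)
    have hb : (fun i => b (v i)) = Fin.tail b ∘ τ := by
      funext i
      simp [τ, Fin.tail, hσ]
    rw [hb, f.map_perm, g.map_perm, h]

/-- Pointwise form of the particle density lemma: in an `m`-dimensional real vector
space (`m = k+2 ≥ 2`) with a nonzero volume form `Ω` and a nonzero vector `w`, any
alternating `(m−1)`-form `θ` with `i_w θ = 0` is a unique scalar multiple of `i_w Ω`. -/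
theorem stmt_15 (k : ℕ) (V : Type*) [AddCommGroup V] [Module ℝ V]
    [FiniteDimensional ℝ V] (hdim : Module.finrank ℝ V = k + 2)
    (Ω : V [⋀^Fin (k + 2)]→ₗ[ℝ] ℝ) (hΩ : Ω ≠ 0)
    (w : V) (hw : w ≠ 0)
    (θ : V [⋀^Fin (k + 1)]→ₗ[ℝ] ℝ)
    (hθ : θ.curryLeft w = 0) :
    ∃! c : ℝ, θ = c • Ω.curryLeft w := by
  obtain ⟨b, rfl⟩ := Basis.exists_apply_zero_eq hdim hw
  have hΩb : Ω b ≠ 0 := fun h => hΩ (by rw [Ω.eq_smul_basis_det b, h, zero_smul])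
  have hval : Ω.curryLeft (b 0) (Fin.tail b) = Ω b :=
    congrArg Ω (Fin.cons_self_tail b)
  refine ⟨θ (Fin.tail b) / Ω b, ?_, fun c hc => ?_⟩
  · refine b.ext_alternating_of_curryLeft_eq_zero hθ ?_ ?_
    · rw [AlternatingMap.curryLeft_smul, LinearMap.smul_apply, AlternatingMap.curryLeft_same,
        smul_zero]
    · rw [AlternatingMap.smul_apply, hval, smul_eq_mul, div_mul_cancel₀ _ hΩb]
  · rw [hc, AlternatingMap.smul_apply, hval, smul_eq_mul, mul_div_cancel_right₀ _ hΩb]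
end
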